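/- Fix p > 0 and q > 0. For n > 0 let A_n and B_n be independent ℕ-valued random variables, Poisson-distributed with means np and nq respectively, and define the outcome pivot OP(n) = (1/2)·Pr(A_n = B_n) + (1/2)·Pr(A_n = B_n − 1). Then as n → ∞, OP(n) ∼ (1 / (2 (pq)^{1/4} √(πn))) · ((√p + √q)/(2√p)) · e^{−n(√p − √q)²}; that is, the ratio of OP(n) to this expression tends to 1. (Proposition 5, pro_OP.) -/

import Mathlib

/-- The Poisson probability mass function with mean `l`: `f_l(a) = l^a e^{-l} / a!`. -/
noncomputable def poissonPMF (l : ℝ) (a : ℕ) : ℝ := l ^ a * Real.exp (-l) / (Nat.factorial a)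

/-- The outcome pivot `OP(n) = (1/2)·Pr(A_n = B_n) + (1/2)·Pr(A_n = B_n - 1)` for
independent Poisson vote totals `A_n`, `B_n` with means `np`, `nq`. -/
noncomputable def outcomePivot (p q n : ℝ) : ℝ :=
  (1 / 2) * (∑' a : ℕ, poissonPMF (n * p) a * poissonPMF (n * q) a)
    + (1 / 2) * (∑' a : ℕ, poissonPMF (n * p) a * poissonPMF (n * q) (a + 1))

/-!
The number `B - A` for independent Poisson variables with means `l, m` follows the Skellam law:
its mass at `k` is `e^{-(l + m)} (m / l)^{k / 2} I_k(2 √(l m))`, where `I_k` is a modified Bessel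
function. Expanding both factors of `e^{x cos t} = e^{(x / 2) e^{it}} e^{(x / 2) e^{-it}}` and
integrating term by term against `e^{-ikt}` gives
`I_k(x) = (2π)⁻¹ ∫_{-π}^{π} e^{x cos t} cos (k t) dt`. By Laplace's method at the maximum `t = 0` of
`cos`, `I_k(x) ∼ e^x / √(2πx)` for every `k`. With `l = np` and `m = nq` the exponents combine to
`-n (√p - √q)²`, so the masses at `0` and `1` have the same order, with ratio `√(q / p)`, and the
outcome pivot is their average.
-/

open Asymptotics Filter MeasureTheory Real Set Topology

section Laplace

variable {E : Type*} [NormedAddCommGroup E] [NormedSpace ℝ E]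
  {φ : ℝ → ℝ} {g : ℝ → E} {b c δ : ℝ}

/-- The integrand `exp (-x φ(t)) g(t)` of Laplace's method on `[-δ, δ]`, in the variable
`s = √x t` and extended by zero, so that dominated convergence over the whole line applies. -/
noncomputable def laplaceIntegrand (φ : ℝ → ℝ) (g : ℝ → E) (δ x : ℝ) : ℝ → E :=
  (Icc (-(δ * √x)) (δ * √x)).indicator fun s ↦ exp (-(x * φ (s / √x))) • g (s / √x)

lemma mapsTo_div_sqrt_Icc {x : ℝ} (hx : 0 < x) :
    MapsTo (· / √x) (Icc (-(δ * √x)) (δ * √x)) (Icc (-δ) δ) := by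
  rintro s ⟨hs, hs'⟩
  have hx' := sqrt_pos.2 hx
  exact ⟨(le_div_iff₀ hx').2 (by linarith), (div_le_iff₀ hx').2 hs'⟩

lemma mul_div_sqrt_sq {x : ℝ} (hx : 0 < x) (s : ℝ) : x * (s / √x) ^ 2 = s ^ 2 := by
  rw [div_pow, sq_sqrt hx.le, mul_div_cancel₀ _ hx.ne']

lemma aestronglyMeasurable_laplaceIntegrand (hφ : ContinuousOn φ (Icc (-δ) δ))
    (hg : ContinuousOn g (Icc (-δ) δ)) {x : ℝ} (hx : 0 < x) :
    AEStronglyMeasurable (laplaceIntegrand φ g δ x) := by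
  have hdiv : ContinuousOn (· / √x) (Icc (-(δ * √x)) (δ * √x)) := by fun_prop
  have hφ_div := hφ.comp hdiv (mapsTo_div_sqrt_Icc hx)
  have hg_div := hg.comp hdiv (mapsTo_div_sqrt_Icc hx)
  exact (aestronglyMeasurable_indicator_iff measurableSet_Icc).2
    (((hφ_div.const_mul x).neg.rexp.smul hg_div).aestronglyMeasurable measurableSet_Icc)

lemma norm_laplaceIntegrand_le (hδ : 0 ≤ δ) {C : ℝ} (hg : ∀ t ∈ Icc (-δ) δ, ‖g t‖ ≤ C)
    (hφ : ∀ t ∈ Icc (-δ) δ, c * t ^ 2 ≤ φ t) {x : ℝ} (hx : 0 < x) (s : ℝ) :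
    ‖laplaceIntegrand φ g δ x s‖ ≤ C * exp (-c * s ^ 2) := by
  have hC : 0 ≤ C := (norm_nonneg _).trans (hg 0 ⟨by linarith, hδ⟩)
  by_cases hs : s ∈ Icc (-(δ * √x)) (δ * √x)
  · have hmem := mapsTo_div_sqrt_Icc hx hs
    have hexponent : c * s ^ 2 ≤ x * φ (s / √x) :=
      calc c * s ^ 2 = x * (c * (s / √x) ^ 2) := by rw [mul_left_comm, mul_div_sqrt_sq hx]
        _ ≤ x * φ (s / √x) := mul_le_mul_of_nonneg_left (hφ _ hmem) hx.le
    rw [laplaceIntegrand, indicator_of_mem hs, norm_smul, norm_eq_abs, abs_exp, mul_comm]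
    gcongr
    · exact hg _ hmem
    · linarith
  · rw [laplaceIntegrand, indicator_of_notMem hs, norm_zero]
    positivity

lemma tendsto_mul_comp_div_sqrt (h : (fun t ↦ φ t - b * t ^ 2) =o[𝓝 0] fun t ↦ t ^ 2) (s : ℝ) :
    Tendsto (fun x ↦ x * φ (s / √x)) atTop (𝓝 (b * s ^ 2)) := by
  have hsq : ∀ᶠ x : ℝ in atTop, x * (s / √x) ^ 2 = s ^ 2 :=
    (eventually_gt_atTop 0).mono fun x hx ↦ mul_div_sqrt_sq hx s
  have herr : (fun x ↦ x * (φ (s / √x) - b * (s / √x) ^ 2)) =o[atTop] fun _ ↦ s ^ 2 :=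
    ((isBigO_refl id atTop).mul_isLittleO
      (h.comp_tendsto (tendsto_sqrt_atTop.const_div_atTop s))).congr' .rfl hsq
  have herr_lim := (isLittleO_one_iff ℝ).1
    (herr.trans_isBigO (isBigO_const_const (s ^ 2) (one_ne_zero (α := ℝ)) atTop))
  rw [← tendsto_sub_nhds_zero_iff]
  refine herr_lim.congr' ?_
  filter_upwards [hsq] with x hx
  rw [← hx]
  ring

lemma tendsto_laplaceIntegrand (hδ : 0 < δ) (hg : ContinuousAt g 0)
    (hφ : (fun t ↦ φ t - b * t ^ 2) =o[𝓝 0] fun t ↦ t ^ 2) (s : ℝ) :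
    Tendsto (laplaceIntegrand φ g δ · s) atTop (𝓝 (exp (-b * s ^ 2) • g 0)) := by
  have hg_lim : Tendsto (fun x ↦ g (s / √x)) atTop (𝓝 (g 0)) :=
    hg.tendsto.comp (tendsto_sqrt_atTop.const_div_atTop s)
  rw [neg_mul]
  refine ((tendsto_mul_comp_div_sqrt hφ s).neg.rexp.smul hg_lim).congr' ?_
  filter_upwards [(tendsto_sqrt_atTop.const_mul_atTop hδ).eventually_ge_atTop |s|] with x hx
  have hs : s ∈ Icc (-(δ * √x)) (δ * √x) := abs_le.1 hx
  rw [laplaceIntegrand, indicator_of_mem hs]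

lemma integral_laplaceIntegrand (hδ : 0 ≤ δ) {x : ℝ} (hx : 0 < x) :
    ∫ s, laplaceIntegrand φ g δ x s = √x • ∫ t in -δ..δ, exp (-(x * φ t)) • g t := by
  have hx' : 0 < √x := sqrt_pos.2 hx
  have hδx : 0 ≤ δ * √x := by positivity
  unfold laplaceIntegrand
  rw [integral_indicator measurableSet_Icc, integral_Icc_eq_integral_Ioc,
    ← intervalIntegral.integral_of_le (by linarith),
    intervalIntegral.integral_comp_div (fun t ↦ exp (-(x * φ t)) • g t) hx'.ne', neg_div,
    mul_div_cancel_right₀ _ hx'.ne']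

theorem tendsto_sqrt_smul_integral_exp_neg_mul_smul [CompleteSpace E] (hδ : 0 < δ)
    (hφ : ContinuousOn φ (Icc (-δ) δ)) (hg : ContinuousOn g (Icc (-δ) δ)) (hc : 0 < c)
    (hle : ∀ t ∈ Icc (-δ) δ, c * t ^ 2 ≤ φ t)
    (hquad : (fun t ↦ φ t - b * t ^ 2) =o[𝓝 0] fun t ↦ t ^ 2) :
    Tendsto (fun x ↦ √x • ∫ t in -δ..δ, exp (-(x * φ t)) • g t) atTop (𝓝 (√(π / b) • g 0)) := by
  obtain ⟨C, hC⟩ := isCompact_Icc.exists_bound_of_continuousOn hg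
  have hg_zero : ContinuousAt g 0 := hg.continuousAt (Icc_mem_nhds (by linarith) hδ)
  have hlim := tendsto_integral_filter_of_dominated_convergence (fun s ↦ C * exp (-c * s ^ 2))
    ((eventually_gt_atTop 0).mono fun x hx ↦ aestronglyMeasurable_laplaceIntegrand hφ hg hx)
    ((eventually_gt_atTop 0).mono fun x hx ↦
      .of_forall (norm_laplaceIntegrand_le hδ.le hC hle hx))
    ((integrable_exp_neg_mul_sq hc).const_mul C)
    (.of_forall (tendsto_laplaceIntegrand hδ hg_zero hquad))
  rw [integral_smul_const, integral_gaussian] at hlim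
  exact hlim.congr' ((eventually_gt_atTop 0).mono fun x hx ↦ integral_laplaceIntegrand hδ.le hx)

end Laplace

lemma isLittleO_one_sub_cos_sub_sq :
    (fun t ↦ 1 - cos t - 1 / 2 * t ^ 2) =o[𝓝 0] fun t ↦ t ^ 2 := by
  refine IsBigO.trans_isLittleO (g := fun t ↦ t ^ 4) ?_ (isLittleO_pow_pow (by norm_num))
  refine .of_bound (5 / 96) ?_
  filter_upwards [Metric.closedBall_mem_nhds (0 : ℝ) one_pos] with t ht
  have h := cos_bound (x := t) (by simpa using ht)
  rw [norm_eq_abs, norm_eq_abs, abs_pow, ← abs_neg, mul_comm (5 / 96)]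
  convert h using 2
  ring

lemma integral_exp_int_mul_mul_I (m : ℤ) :
    ∫ t in -π..π, Complex.exp (m * t * Complex.I) = if m = 0 then (2 * π : ℂ) else 0 := by
  split_ifs with hm
  · simp [hm]
    ring
  · have hmI : (m * Complex.I : ℂ) ≠ 0 := mul_ne_zero (mod_cast hm) Complex.I_ne_zero
    simp_rw [mul_right_comm (m : ℂ) _ Complex.I]
    rw [integral_exp_mul_complex hmI, div_eq_zero_iff, sub_eq_zero]
    left
    rw [Complex.exp_eq_exp_iff_exists_int]
    exact ⟨m, by push_cast; ring⟩

lemma hasSum_ite_eq_add_iff {M : Type*} [AddCommMonoid M] [TopologicalSpace M] (u : ℕ × ℕ → M)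
    (k : ℕ) {s : M} :
    HasSum (fun i : ℕ × ℕ ↦ if i.2 = i.1 + k then u i else 0) s ↔
      HasSum (fun a ↦ u (a, a + k)) s := by
  have hinj : Function.Injective fun a ↦ (a, a + k) := fun a b h ↦ congrArg Prod.fst h
  rw [← hinj.hasSum_iff fun i hi ↦ if_neg fun h ↦ hi ⟨i.1, by simp [← h]⟩]
  simp [Function.comp_def]

theorem hasSum_mul_add_eq_integral {α β : ℕ → ℂ} {f g : ℂ → ℂ}
    (hf : ∀ z, ‖z‖ = 1 → HasSum (fun a ↦ α a * z ^ a) (f z))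
    (hg : ∀ z, ‖z‖ = 1 → HasSum (fun a ↦ β a * z ^ a) (g z)) (k : ℕ) :
    HasSum (fun a ↦ α a * β (a + k)) ((2 * π : ℂ)⁻¹ * ∫ t in -π..π,
      f (Complex.exp (-t * Complex.I)) * g (Complex.exp (t * Complex.I)) *
        Complex.exp (-k * t * Complex.I)) := by
  let F (i : ℕ × ℕ) (t : ℝ) : ℂ :=
    α i.1 * β i.2 * Complex.exp (((i.2 - i.1 - k : ℤ) : ℂ) * t * Complex.I)
  have hF_sum (t : ℝ) : HasSum (F · t) (f (Complex.exp (-t * Complex.I)) *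
      g (Complex.exp (t * Complex.I)) * Complex.exp (-k * t * Complex.I)) := by
    have hf' := hf (Complex.exp (-t * Complex.I)) (mod_cast Complex.norm_exp_ofReal_mul_I (-t))
    have hg' := hg _ (Complex.norm_exp_ofReal_mul_I t)
    have hs := summable_mul_of_summable_norm hf'.summable.norm hg'.summable.norm
    refine ((hf'.mul hg' hs).mul_right _).congr_fun fun i ↦ ?_
    rw [← Complex.exp_nat_mul, ← Complex.exp_nat_mul, mul_mul_mul_comm, mul_assoc,
      ← Complex.exp_add, ← Complex.exp_add]
    simp only [F]
    push_cast
    ring_nf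
  have hF_norm (i : ℕ × ℕ) (t : ℝ) : ‖F i t‖ = ‖α i.1 * β i.2‖ := by
    have h := Complex.norm_exp_ofReal_mul_I (((i.2 - i.1 - k : ℤ) : ℝ) * t)
    push_cast at h
    simp [F, h]
  have hF_int (i : ℕ × ℕ) : (2 * π : ℂ)⁻¹ * ∫ t in -π..π, F i t =
      if i.2 = i.1 + k then α i.1 * β i.2 else 0 := by
    simp only [F, intervalIntegral.integral_const_mul, integral_exp_int_mul_mul_I, sub_sub,
      sub_eq_zero, ← Nat.cast_add, Nat.cast_inj, mul_ite, mul_zero]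
    rw [mul_left_comm, inv_mul_cancel₀ (by simp [pi_ne_zero]), mul_one]
  have hF_meas (i : ℕ × ℕ) : AEStronglyMeasurable (F i) (volume.restrict (uIoc (-π) π)) :=
    Continuous.aestronglyMeasurable (by fun_prop)
  have hαβ : Summable fun i : ℕ × ℕ ↦ ‖α i.1 * β i.2‖ := by
    have hα := (hf 1 norm_one).summable.norm
    have hβ := (hg 1 norm_one).summable.norm
    simp only [one_pow, mul_one] at hα hβ
    exact hα.mul_norm hβ
  have hint := intervalIntegral.hasSum_integral_of_dominated_convergence (μ := volume) (a := -π)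
    (b := π) (F := F) (fun i _ ↦ ‖α i.1 * β i.2‖) hF_meas
    (fun i ↦ .of_forall fun t _ ↦ (hF_norm i t).le) (.of_forall fun _ _ ↦ hαβ) (by simp)
    (.of_forall fun t _ ↦ hF_sum t)
  rw [← hasSum_ite_eq_add_iff fun i ↦ α i.1 * β i.2]
  exact (hint.mul_left (2 * π : ℂ)⁻¹).congr_fun fun i ↦ (hF_int i).symm

/-- The modified Bessel function of the first kind `I_k`, of natural order `k`, through its power
series. It governs the Skellam law. -/
noncomputable def besselI (k : ℕ) (x : ℝ) : ℝ :=
  ∑' a : ℕ, (x / 2) ^ (2 * a + k) / (a.factorial * (a + k).factorial)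

theorem besselI_eq_integral (k : ℕ) (x : ℝ) :
    besselI k x = (2 * π)⁻¹ * ∫ t in -π..π, exp (x * cos t) * cos (k * t) := by
  let α (a : ℕ) : ℂ := (x / 2 : ℂ) ^ a / a.factorial
  have hα (z : ℂ) : HasSum (fun a ↦ α a * z ^ a) (Complex.exp (x / 2 * z)) := by
    rw [Complex.exp_eq_exp_ℂ]
    refine (NormedSpace.expSeries_div_hasSum_exp (x / 2 * z)).congr_fun fun a ↦ ?_
    rw [mul_pow, mul_div_right_comm]
  have hprod (t : ℝ) : Complex.exp (x / 2 * Complex.exp (-t * Complex.I)) *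
      Complex.exp (x / 2 * Complex.exp (t * Complex.I)) * Complex.exp (-k * t * Complex.I) =
        (exp (x * cos t) : ℝ) * Complex.exp ((-(k * t) : ℝ) * Complex.I) := by
    rw [← Complex.exp_add]
    push_cast
    rw [Complex.cos]
    ring_nf
  have hsum := hasSum_mul_add_eq_integral (fun z _ ↦ hα z) (fun z _ ↦ hα z) k
  have hterm (a : ℕ) : α a * α (a + k) =
      ((x / 2) ^ (2 * a + k) / (a.factorial * (a + k).factorial) : ℝ) := by
    push_cast
    rw [div_mul_div_comm, ← pow_add]
    ring_nf
  simp only [hprod, hterm] at hsum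
  have hint : IntervalIntegrable
      (fun t : ℝ ↦ (exp (x * cos t) : ℂ) * Complex.exp ((-(k * t) : ℝ) * Complex.I))
      volume (-π) π :=
    Continuous.intervalIntegrable (by fun_prop) _ _
  have hre := Complex.reCLM.intervalIntegral_comp_comm hint
  simp only [Complex.reCLM_apply, Complex.re_ofReal_mul, Complex.exp_ofReal_mul_I_re,
    cos_neg] at hre
  rw [besselI, hre]
  simpa only [← Complex.ofReal_ofNat, ← Complex.ofReal_mul, ← Complex.ofReal_inv,
    Complex.re_ofReal_mul, Complex.ofReal_re] using (Complex.hasSum_re hsum).tsum_eq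

theorem besselI_isEquivalent (k : ℕ) :
    besselI k ~[atTop] fun x ↦ exp x / √(2 * π * x) := by
  have hlaplace := tendsto_sqrt_smul_integral_exp_neg_mul_smul (φ := fun t ↦ 1 - cos t)
    (g := fun t ↦ cos (k * t)) (c := 2 / π ^ 2) pi_pos (by fun_prop) (by fun_prop) (by positivity)
    (fun t ht ↦ by linarith [cos_le_one_sub_mul_cos_sq (abs_le.2 ht)]) isLittleO_one_sub_cos_sub_sq
  have hconst : √(2 * π) / (2 * π) * √(π / (1 / 2)) = 1 := by
    rw [div_div_eq_mul_div, div_one, mul_comm π, div_mul_eq_mul_div, mul_self_sqrt (by positivity),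
      div_self (by positivity)]
  rw [isEquivalent_iff_tendsto_one]
  · simp only [mul_zero, cos_zero, smul_eq_mul, mul_one] at hlaplace
    rw [← hconst]
    refine (hlaplace.const_mul _).congr' ?_
    filter_upwards [eventually_gt_atTop 0] with x hx
    have hfactor (t : ℝ) : exp (x * cos t) * cos (k * t) =
        exp x * (exp (-(x * (1 - cos t))) * cos (k * t)) := by
      rw [← mul_assoc, ← exp_add]
      ring_nf
    simp only [Pi.div_apply, besselI_eq_integral, hfactor, intervalIntegral.integral_const_mul]
    rw [sqrt_mul (by positivity) x]
    field_simp
  · filter_upwards [eventually_gt_atTop 0] with x hx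
    positivity

/-- The Skellam probability mass `Pr(B - A = k)` for independent Poisson variables `A`, `B` with
means `l`, `m`. Only `k ≥ 0` is encoded; the outcome pivot involves `k = 0` and `k = 1`. -/
noncomputable def skellamPMF (l m : ℝ) (k : ℕ) : ℝ :=
  ∑' a : ℕ, poissonPMF l a * poissonPMF m (a + k)

theorem skellamPMF_eq_besselI {l m : ℝ} (hl : 0 < l) (hm : 0 ≤ m) (k : ℕ) :
    skellamPMF l m k = exp (-(l + m)) * √(m / l) ^ k * besselI k (2 * √(l * m)) := by
  rw [skellamPMF, besselI, ← tsum_mul_left]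
  refine tsum_congr fun a ↦ ?_
  have hpow : l ^ a * m ^ (a + k) = √(m / l) ^ k * √(l * m) ^ (2 * a + k) := by
    have hm_eq : √(m / l) * √(l * m) = m := by
      rw [← sqrt_mul (by positivity), ← mul_assoc, div_mul_cancel₀ _ hl.ne', sqrt_mul_self hm]
    rw [pow_add √(l * m), pow_mul, sq_sqrt (by positivity), mul_left_comm, ← mul_pow, hm_eq]
    ring
  rw [mul_div_cancel_left₀ _ two_ne_zero, neg_add, exp_add, poissonPMF, poissonPMF, mul_assoc,
    ← mul_div_assoc (√(m / l) ^ k), ← hpow]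
  field_simp

theorem skellamPMF_mul_isEquivalent {p q : ℝ} (hp : 0 < p) (hq : 0 < q) (k : ℕ) :
    (fun n ↦ skellamPMF (n * p) (n * q) k) ~[atTop] fun n ↦
      √(q / p) ^ k * (exp (-(n * (√p - √q) ^ 2)) / (2 * √(π * n * √(p * q)))) := by
  have hscale : Tendsto (fun n ↦ 2 * (n * √(p * q))) atTop atTop :=
    (tendsto_id.atTop_mul_const (by positivity)).const_mul_atTop two_pos
  have hbessel := (besselI_isEquivalent k).comp_tendsto hscale
  have hprod := (IsEquivalent.refl (u := fun n ↦ exp (-(n * (p + q))) * √(q / p) ^ k)).mul hbessel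
  refine (hprod.congr_left ?_).congr_right ?_
  · filter_upwards [eventually_gt_atTop 0] with n hn
    have hsqrt : √(n * p * (n * q)) = n * √(p * q) := by
      rw [mul_mul_mul_comm, sqrt_mul (by positivity), sqrt_mul_self hn.le]
    simp only [Pi.mul_apply, Function.comp_apply]
    rw [skellamPMF_eq_besselI (by positivity) (by positivity), mul_div_mul_left _ _ hn.ne', hsqrt,
      mul_add]
  · filter_upwards [eventually_gt_atTop 0] with n _
    have hexp : exp (-(n * (√p - √q) ^ 2)) = exp (-(n * (p + q))) * exp (2 * (n * √(p * q))) := by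
      rw [← exp_add, sub_sq, sq_sqrt hp.le, sq_sqrt hq.le, sqrt_mul hp.le]
      ring_nf
    have hsqrt : √(2 * π * (2 * (n * √(p * q)))) = 2 * √(π * n * √(p * q)) := by
      rw [← sqrt_sq (zero_le_two (α := ℝ)), ← sqrt_mul (by positivity), sqrt_sq zero_le_two]
      ring_nf
    simp only [Pi.mul_apply, Function.comp_apply]
    rw [hexp, hsqrt]
    ring

lemma outcomePivot_eq_skellamPMF (p q n : ℝ) :
    outcomePivot p q n =
      1 / 2 * (skellamPMF (n * p) (n * q) 0 + skellamPMF (n * p) (n * q) 1) :=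
  (mul_add _ _ _).symm

theorem outcomePivot_isEquivalent {p q : ℝ} (hp : 0 < p) (hq : 0 < q) :
    outcomePivot p q ~[atTop] fun n ↦
      (1 + √(q / p)) / 2 * (exp (-(n * (√p - √q) ^ 2)) / (2 * √(π * n * √(p * q)))) := by
  have hsum := (skellamPMF_mul_isEquivalent hp hq 0).add_add_of_nonneg
    (fun n ↦ by positivity) (fun n ↦ by positivity) (skellamPMF_mul_isEquivalent hp hq 1)
  have hhalf := (IsEquivalent.refl (u := fun _ ↦ (1 / 2 : ℝ))).mul hsum
  refine (hhalf.congr_left ?_).congr_right ?_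
  · exact .of_forall fun n ↦ (outcomePivot_eq_skellamPMF p q n).symm
  · exact .of_forall fun n ↦ by
      simp only [Pi.mul_apply, Pi.add_apply]
      ring

lemma one_add_sqrt_div_div_two {p : ℝ} (hp : 0 < p) (q : ℝ) :
    (1 + √(q / p)) / 2 = (√p + √q) / (2 * √p) := by
  rw [sqrt_div' _ hp.le]
  field_simp

lemma sqrt_mul_sqrt_eq_rpow_mul {r : ℝ} (hr : 0 ≤ r) (x : ℝ) :
    √(x * √r) = r ^ ((1 : ℝ) / 4) * √x := by
  rw [sqrt_mul' _ (sqrt_nonneg _), sqrt_eq_rpow √r, sqrt_eq_rpow r, ← rpow_mul hr]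
  norm_num
  ring

/-- **Proposition 5 (pro_OP).** Fix `p, q > 0`. As `n → ∞`,
`OP(n) ∼ (1/(2 (pq)^{1/4} √(πn))) · ((√p+√q)/(2√p)) · e^{-n(√p-√q)²}`; that is, the ratio
of `OP(n)` to this expression tends to `1`. -/
theorem outcome_pivot_asymptotic (p q : ℝ) (hp : 0 < p) (hq : 0 < q) :
    Filter.Tendsto
      (fun n : ℝ =>
        outcomePivot p q n
          / ((1 / (2 * (p * q) ^ ((1 : ℝ) / 4) * Real.sqrt (Real.pi * n)))
              * ((Real.sqrt p + Real.sqrt q) / (2 * Real.sqrt p))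
              * Real.exp (-(n * (Real.sqrt p - Real.sqrt q) ^ 2))))
      Filter.atTop (nhds 1) := by
  refine (isEquivalent_iff_tendsto_one ?_).1
    ((outcomePivot_isEquivalent hp hq).congr_right (.of_forall fun n ↦ ?_))
  · filter_upwards [eventually_gt_atTop 0] with n hn
    positivity
  · dsimp only
    rw [one_add_sqrt_div_div_two hp, sqrt_mul_sqrt_eq_rpow_mul (by positivity)]
    ring
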